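/- For every n in ℕ ∪ {2^∞} there exists a continuous map f : [0,1] → [0,1] such that the set P(f) of periods of all cycles of f equals the initial segment S(n) of the Sharkovsky ordering. -/

import Mathlib

/-- The odd part of a natural number: `n = 2^k * oddPart n` with `oddPart n` odd (for `n ≠ 0`). -/
def oddPart (n : ℕ) : ℕ := n / 2 ^ (n.factorization 2)

/-- The Sharkovsky ordering `a <ₛ b`: powers of 2 in increasing order come first,
then for each dyadic level (in decreasing order of the power of 2) the numbers
`2^k * odd` in decreasing order of the odd part, the odd numbers `> 1` being the largest. -/
def SharkLt (a b : ℕ) : Prop :=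
  (oddPart a = 1 ∧ oddPart b = 1 ∧ a < b) ∨
  (oddPart a = 1 ∧ oddPart b ≠ 1) ∨
  (oddPart a ≠ 1 ∧ oddPart b ≠ 1 ∧
    (b.factorization 2 < a.factorization 2 ∨
      (a.factorization 2 = b.factorization 2 ∧ oddPart b < oddPart a)))

/-- The initial segment `S(n) = {m : m <ₛ n} ∪ {n}` of the Sharkovsky ordering. -/
def sharkSegment (n : ℕ) : Set ℕ := {m | SharkLt m n ∨ m = n}

/-- The set of (minimal) periods of all cycles of `f` lying in `I`. -/
def periodsOn (f : ℝ → ℝ) (I : Set ℝ) : Set ℕ :=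
  {n | 0 < n ∧ ∃ x ∈ I, Function.minimalPeriod f x = n}

open Function Set

/-- The doubling operator. -/
noncomputable def dbl (f : ℝ → ℝ) (x : ℝ) : ℝ :=
  (2 + f (max 0 (min 1 (3 * x)))) * max 0 (min (1 / 3) (2 / 3 - x)) + max 0 (x - 2 / 3)

lemma dbl_left (f : ℝ → ℝ) {x : ℝ} (hx : x ∈ Icc (0 : ℝ) 1) : dbl f (x / 3) = (2 + f x) / 3 := by
  obtain ⟨h0, h1⟩ := hx
  unfold dbl
  have e1 : 3 * (x / 3) = x := by ring
  rw [e1, min_eq_right h1, max_eq_right h0, min_eq_left (by linarith),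
    max_eq_right (by norm_num), max_eq_left (by linarith)]
  ring

lemma dbl_right (f : ℝ → ℝ) {x : ℝ} (hx : x ∈ Icc (0 : ℝ) 1) : dbl f ((x + 2) / 3) = x / 3 := by
  obtain ⟨h0, h1⟩ := hx
  unfold dbl
  rw [min_eq_right (show 2 / 3 - (x + 2) / 3 ≤ 1 / 3 by linarith),
    max_eq_left (show 2 / 3 - (x + 2) / 3 ≤ 0 by linarith),
    max_eq_right (show 0 ≤ (x + 2) / 3 - 2 / 3 by linarith)]
  ring

lemma dbl_mid (f : ℝ → ℝ) {x : ℝ} (h0 : 1 / 3 ≤ x) (h1 : x ≤ 2 / 3) :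
    dbl f x = (2 + f 1) * (2 / 3 - x) := by
  unfold dbl
  rw [min_eq_left (show 1 ≤ 3 * x by linarith), max_eq_right (show (0 : ℝ) ≤ 1 by norm_num),
    min_eq_right (by linarith), max_eq_right (by linarith), max_eq_left (by linarith)]
  ring

lemma dbl_mapsTo {f : ℝ → ℝ} (hf : MapsTo f (Icc (0 : ℝ) 1) (Icc (0 : ℝ) 1)) :
    MapsTo (dbl f) (Icc (0 : ℝ) 1) (Icc (0 : ℝ) 1) := by
  rintro x ⟨h0, h1⟩
  rcases le_total x (1 / 3) with h | h
  · have hx : 3 * x ∈ Icc (0 : ℝ) 1 := ⟨by linarith, by linarith⟩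
    have := dbl_left f hx
    rw [show 3 * x / 3 = x by ring] at this
    have h2 := hf hx
    rw [this]
    exact ⟨by linarith [h2.1], by linarith [h2.2]⟩
  rcases le_total x (2 / 3) with h' | h'
  · rw [dbl_mid f h h']
    have h2 := hf (show (1 : ℝ) ∈ Icc (0 : ℝ) 1 by simp)
    exact ⟨by nlinarith [h2.1], by nlinarith [h2.2, h2.1]⟩
  · have hx : 3 * x - 2 ∈ Icc (0 : ℝ) 1 := ⟨by linarith, by linarith⟩
    have := dbl_right f hx
    rw [show (3 * x - 2 + 2) / 3 = x by ring] at this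
    rw [this]
    exact ⟨by linarith, by linarith⟩

lemma dbl_continuousOn {f : ℝ → ℝ} (hf : ContinuousOn f (Icc (0 : ℝ) 1)) :
    ContinuousOn (dbl f) (Icc (0 : ℝ) 1) := by
  have : Continuous fun x : ℝ => f (max 0 (min 1 (3 * x))) := by
    apply hf.comp_continuous (by fun_prop)
    intro x
    exact ⟨le_max_left _ _, max_le (by norm_num) (min_le_left _ _)⟩
  apply Continuous.continuousOn
  exact ((continuous_const.add this).mul (by fun_prop)).add (by fun_prop)

lemma dbl_iter {f g : ℝ → ℝ} (hf : MapsTo f (Icc (0 : ℝ) 1) (Icc (0 : ℝ) 1))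
    (hg : EqOn g (dbl f) (Icc (0 : ℝ) 1)) {x : ℝ} (hx : x ∈ Icc (0 : ℝ) 1) (j : ℕ) :
    g^[2 * j] (x / 3) = f^[j] x / 3 := by
  induction j with
  | zero => simp
  | succ j ih =>
    have hj : f^[j] x ∈ Icc (0 : ℝ) 1 := hf.iterate j hx
    have hj' := hf hj
    rw [show 2 * (j + 1) = 2 * j + 1 + 1 by ring, iterate_succ_apply', iterate_succ_apply', ih,
      iterate_succ_apply',
      hg (show f^[j] x / 3 ∈ Icc (0 : ℝ) 1 from ⟨by linarith [hj.1], by linarith [hj.2]⟩),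
      dbl_left f hj, hg ⟨by linarith [hj'.1], by linarith [hj'.2]⟩, add_comm, dbl_right f hj']

lemma dbl_minimalPeriod {f g : ℝ → ℝ} (hf : MapsTo f (Icc (0 : ℝ) 1) (Icc (0 : ℝ) 1))
    (hg : EqOn g (dbl f) (Icc (0 : ℝ) 1)) {x : ℝ} (hx : x ∈ Icc (0 : ℝ) 1) :
    minimalPeriod g (x / 3) = 2 * minimalPeriod f x := by
  have key : ∀ n, IsPeriodicPt g n (x / 3) ↔ 2 * minimalPeriod f x ∣ n := by
    intro n
    rcases Nat.even_or_odd' n with ⟨j, rfl | rfl⟩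
    · rw [Nat.mul_dvd_mul_iff_left (by norm_num), ← isPeriodicPt_iff_minimalPeriod_dvd,
        IsPeriodicPt, IsFixedPt, dbl_iter hf hg hx, IsPeriodicPt, IsFixedPt]
      constructor <;> intro h <;> linarith
    · constructor
      · intro h
        exfalso
        have hj : f^[j] x ∈ Icc (0 : ℝ) 1 := hf.iterate j hx
        have hj' := hf hj
        rw [IsPeriodicPt, IsFixedPt, iterate_succ_apply', dbl_iter hf hg hx,
          hg ⟨by linarith [hj.1], by linarith [hj.2]⟩, dbl_left f hj] at h
        linarith [hx.2, hj'.1]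
      · intro h
        have := (Dvd.intro _ rfl : 2 ∣ 2 * minimalPeriod f x).trans h
        omega
  apply Nat.dvd_antisymm
  · exact isPeriodicPt_iff_minimalPeriod_dvd.1 ((key _).2 dvd_rfl)
  · exact (key _).1 (isPeriodicPt_minimalPeriod _ _)

lemma dbl_periods {f g : ℝ → ℝ} (hf : MapsTo f (Icc (0 : ℝ) 1) (Icc (0 : ℝ) 1))
    (hg : EqOn g (dbl f) (Icc (0 : ℝ) 1)) (n : ℕ) :
    n ∈ periodsOn g (Icc (0 : ℝ) 1) ↔ n = 1 ∨ ∃ m ∈ periodsOn f (Icc (0 : ℝ) 1), n = 2 * m := by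
  have hs := hf (show (1 : ℝ) ∈ Icc (0 : ℝ) 1 by simp)
  set s := 2 + f 1 with hsdef
  have hs2 : 2 ≤ s := by linarith [hs.1]
  have hs3 : s ≤ 3 := by linarith [hs.2]
  set z := 2 / 3 * s / (1 + s) with hz
  have hzz : z * (1 + s) = 2 / 3 * s := by rw [hz]; field_simp
  have hz1 : 1 / 3 ≤ z := by nlinarith
  have hz2 : z ≤ 2 / 3 := by nlinarith
  have hgm : MapsTo g (Icc (0 : ℝ) 1) (Icc (0 : ℝ) 1) := by
    intro x hx; rw [hg hx]; exact dbl_mapsTo hf hx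
  have hmid : ∀ x, 1 / 3 ≤ x → x ≤ 2 / 3 → g x = s * (2 / 3 - x) := by
    intro x h1 h2
    rw [hg ⟨by linarith, by linarith⟩, dbl_mid f h1 h2]
  constructor
  · rintro ⟨hn, y, hy, hyn⟩
    have hper : y ∈ periodicPts g := minimalPeriod_pos_iff_mem_periodicPts.1 (by omega)
    have hA : ∀ j, g^[j] y ≤ 1 / 3 → ∃ m ∈ periodsOn f (Icc (0 : ℝ) 1), n = 2 * m := by
      intro j hj
      have hjI : g^[j] y ∈ Icc (0 : ℝ) 1 := hgm.iterate j hy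
      have hx : 3 * g^[j] y ∈ Icc (0 : ℝ) 1 := ⟨by linarith [hjI.1], by linarith⟩
      have h := dbl_minimalPeriod hf hg hx
      rw [show 3 * g^[j] y / 3 = g^[j] y by ring, minimalPeriod_apply_iterate hper, hyn] at h
      exact ⟨_, ⟨by omega, _, hx, rfl⟩, h⟩
    by_cases h1 : ∃ j, g^[j] y ≤ 1 / 3
    · obtain ⟨j, hj⟩ := h1
      exact Or.inr (hA j hj)
    by_cases h2 : ∃ j, 2 / 3 ≤ g^[j] y
    · obtain ⟨j, hj⟩ := h2
      right
      apply hA (j + 1)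
      have hjI : g^[j] y ∈ Icc (0 : ℝ) 1 := hgm.iterate j hy
      have hx : 3 * g^[j] y - 2 ∈ Icc (0 : ℝ) 1 := ⟨by linarith, by linarith [hjI.2]⟩
      have h := dbl_right f hx
      rw [show (3 * g^[j] y - 2 + 2) / 3 = g^[j] y by ring, ← hg hjI] at h
      rw [iterate_succ_apply', h]
      linarith [hjI.2]
    push Not at h1 h2
    left
    have hit : ∀ j, g^[j] y - z = (-s) ^ j * (y - z) := by
      intro j
      induction j with
      | zero => simp
      | succ j ih =>
        rw [iterate_succ_apply', hmid _ (h1 j).le (h2 j).le, pow_succ']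
        linear_combination (-s) * ih - hzz
    have hfix := hit n
    have : g^[n] y = y := by rw [← hyn]; exact isPeriodicPt_minimalPeriod g y
    rw [this] at hfix
    have habs : |y - z| = s ^ n * |y - z| := by
      conv_lhs => rw [hfix, abs_mul, abs_pow, abs_neg, abs_of_nonneg (by linarith : 0 ≤ s)]
    have hsn : 1 < s ^ n := one_lt_pow₀ (by linarith) (by omega)
    have hyz : y - z = 0 := by
      rw [← abs_eq_zero]
      nlinarith [abs_nonneg (y - z)]
    have : g y = y := by
      rw [show y = z by linarith, hmid z hz1 hz2]; linarith
    rw [← hyn]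
    exact minimalPeriod_eq_one_iff_isFixedPt.2 this
  · rintro (rfl | ⟨m, ⟨hm, x, hx, rfl⟩, rfl⟩)
    · refine ⟨one_pos, z, ⟨by linarith, by linarith⟩, ?_⟩
      apply minimalPeriod_eq_one_iff_isFixedPt.2
      rw [IsFixedPt, hmid z hz1 hz2]; linarith
    · exact ⟨by omega, x / 3, ⟨by linarith [hx.1], by linarith [hx.2]⟩, dbl_minimalPeriod hf hg hx⟩

lemma exists_dbl_fixed : ∃ f : ℝ → ℝ, Continuous f ∧
    MapsTo f (Icc (0 : ℝ) 1) (Icc (0 : ℝ) 1) ∧ EqOn f (dbl f) (Icc (0 : ℝ) 1) := by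
  let E : C(Icc (0 : ℝ) 1, Icc (0 : ℝ) 1) → ℝ → ℝ :=
    fun φ x => (φ (projIcc 0 1 zero_le_one x) : ℝ)
  have hE : ∀ φ, Continuous (E φ) := fun φ =>
    continuous_subtype_val.comp (φ.continuous.comp continuous_projIcc)
  have hEm : ∀ φ, MapsTo (E φ) (Icc (0 : ℝ) 1) (Icc (0 : ℝ) 1) := fun φ x _ => (φ _).2
  let T : C(Icc (0 : ℝ) 1, Icc (0 : ℝ) 1) → C(Icc (0 : ℝ) 1, Icc (0 : ℝ) 1) := fun φ =>
    ⟨fun x => ⟨dbl (E φ) x, dbl_mapsTo (hEm φ) x.2⟩, by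
      apply Continuous.subtype_mk
      exact (dbl_continuousOn (hE φ).continuousOn).comp_continuous continuous_subtype_val
        (fun x => x.2)⟩
  have hT : ContractingWith (1 / 3) T := by
    refine ⟨by rw [← NNReal.coe_lt_coe]; norm_num, LipschitzWith.of_dist_le_mul fun φ ψ => ?_⟩
    rw [ContinuousMap.dist_le (by positivity)]
    intro x
    have hd : ∀ t, |E φ t - E ψ t| ≤ dist φ ψ := fun t =>
      ContinuousMap.dist_apply_le_dist (f := φ) (g := ψ) (projIcc 0 1 zero_le_one t)
    change |dbl (E φ) x - dbl (E ψ) x| ≤ _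
    unfold dbl
    have hc0 : 0 ≤ max 0 (min (1 / 3) (2 / 3 - (x : ℝ))) := le_max_left _ _
    have hc1 : max 0 (min (1 / 3) (2 / 3 - (x : ℝ))) ≤ 1 / 3 :=
      max_le (by norm_num) (min_le_left _ _)
    generalize max 0 (min (1 / 3) (2 / 3 - (x : ℝ))) = c at hc0 hc1
    have h := hd (max 0 (min 1 (3 * (x : ℝ))))
    generalize max 0 (min 1 (3 * (x : ℝ))) = t at h
    rw [show (2 + E φ t) * c + max 0 ((x : ℝ) - 2 / 3) - ((2 + E ψ t) * c + max 0 ((x : ℝ) - 2 / 3))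
      = c * (E φ t - E ψ t) by ring, abs_mul, abs_of_nonneg hc0]
    push_cast
    exact mul_le_mul hc1 h (abs_nonneg _) (by norm_num)
  have : Nonempty C(Icc (0 : ℝ) 1, Icc (0 : ℝ) 1) := ⟨ContinuousMap.id _⟩
  refine ⟨E hT.fixedPoint, hE _, hEm _, ?_⟩
  intro x hx
  have h := congrArg (fun φ : C(Icc (0 : ℝ) 1, Icc (0 : ℝ) 1) => ((φ ⟨x, hx⟩ : Icc (0 : ℝ) 1) : ℝ))
    hT.fixedPoint_isFixedPt
  change dbl (E hT.fixedPoint) x = _ at h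
  rw [h]
  simp only [E]
  rw [projIcc_of_mem _ hx]

/-- A skew tent map on `[-4, 2]`. -/
noncomputable def skew (b x : ℝ) : ℝ := min (2 + (x + 1) * (2 + b) / 3) (-2 * x)

lemma skew_left {b x : ℝ} (hb : 0 ≤ b) (hx : x ≤ -1) : skew b x = 2 + (x + 1) * (2 + b) / 3 :=
  min_eq_left (by nlinarith)

lemma skew_right {b x : ℝ} (hb : 0 ≤ b) (hx : -1 ≤ x) : skew b x = -2 * x :=
  min_eq_right (by nlinarith)

lemma skew_mapsTo {b : ℝ} (hb : 0 ≤ b) (hb1 : b ≤ 1) :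
    MapsTo (skew b) (Icc (-4 : ℝ) 2) (Icc (-4 : ℝ) 2) := by
  rintro x ⟨h0, h1⟩
  rcases le_total x (-1) with h | h
  · rw [skew_left hb h]
    exact ⟨by nlinarith, by nlinarith⟩
  · rw [skew_right hb h]
    exact ⟨by linarith, by linarith⟩

lemma skew_iter {b y : ℝ} (hb : 0 ≤ b) (N : ℕ) (h : ∀ j < N, -1 ≤ (-2 : ℝ) ^ j * y) :
    ∀ j ≤ N, (skew b)^[j] y = (-2 : ℝ) ^ j * y := by
  intro j hj
  induction j with
  | zero => simp
  | succ j ih =>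
    rw [iterate_succ_apply', ih (by omega), skew_right hb (h j (by omega)), pow_succ']
    ring

lemma skew_exists (K m : ℕ) (hm : 2 ≤ m) (hm' : Even m ∨ 2 * K + 3 ≤ m) :
    ∃ y ∈ Icc (-4 : ℝ) 2, minimalPeriod (skew ((1 / 4) ^ K)) y = m := by
  set b : ℝ := (1 / 4) ^ K with hbdef
  have hb : 0 < b := by positivity
  have hb1 : b ≤ 1 := pow_le_one₀ (by norm_num) (by norm_num)
  obtain ⟨y, hy0, hy1, hy2⟩ : ∃ y : ℝ, (-2) ^ (m - 1) * y ≤ -1 ∧ -4 ≤ (-2) ^ (m - 1) * y ∧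
      2 + ((-2) ^ (m - 1) * y + 1) * (2 + b) / 3 = y := by
    have hQ2 : (2 : ℝ) ≤ 2 ^ (m - 1) := by
      calc (2 : ℝ) = 2 ^ 1 := by norm_num
        _ ≤ _ := pow_le_pow_right₀ (by norm_num) (by omega)
    rcases Nat.even_or_odd m with he | ho
    · have hodd : Odd (m - 1) := Nat.Even.sub_odd (by omega) he odd_one
      rw [hodd.neg_pow]
      generalize (2 : ℝ) ^ (m - 1) = Q at hQ2
      have hpos : 0 < 3 + Q * (2 + b) := by positivity
      have e : -Q * ((8 + b) / (3 + Q * (2 + b))) = -(Q * (8 + b)) / (3 + Q * (2 + b)) := by ring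
      refine ⟨(8 + b) / (3 + Q * (2 + b)), ?_, ?_, ?_⟩
      · rw [e, div_le_iff₀ hpos]; nlinarith
      · rw [e, le_div_iff₀ hpos]; nlinarith
      · field_simp; ring
    · have hle : 2 * K + 3 ≤ m := by
        rcases hm' with h | h
        · exact absurd h (Nat.not_even_iff_odd.2 ho)
        · exact h
      have hev : Even (m - 1) := Nat.Odd.sub_odd ho odd_one
      have hQb : 4 ≤ (2 : ℝ) ^ (m - 1) * b := by
        have h1 : (2 : ℝ) ^ (2 * K + 2) ≤ 2 ^ (m - 1) :=
          pow_le_pow_right₀ (by norm_num) (by omega)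
        have h2 : (2 : ℝ) ^ (2 * K + 2) * b = 4 := by
          rw [hbdef, pow_add, pow_mul, mul_right_comm, ← mul_pow]; norm_num
        nlinarith
      rw [hev.neg_pow]
      generalize (2 : ℝ) ^ (m - 1) = Q at hQ2 hQb
      have hpos : 0 < Q * (2 + b) - 3 := by nlinarith
      have e : Q * (-(8 + b) / (Q * (2 + b) - 3)) = -(Q * (8 + b)) / (Q * (2 + b) - 3) := by ring
      refine ⟨-(8 + b) / (Q * (2 + b) - 3), ?_, ?_, ?_⟩
      · rw [e, div_le_iff₀ hpos]; nlinarith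
      · rw [e, le_div_iff₀ hpos]; nlinarith
      · have := hpos.ne'
        field_simp; ring
  have hyne : y ≠ 0 := by rintro rfl; norm_num at hy0
  have habs : ∀ j ≤ m - 1, 2 ^ (m - 1 - j) * |(-2 : ℝ) ^ j * y| ≤ 4 := by
    intro j hj
    have h1 : |(-2 : ℝ) ^ (m - 1) * y| ≤ 4 := abs_le.2 ⟨hy1, by linarith⟩
    have h2 : (-2 : ℝ) ^ (m - 1) * y = (-2) ^ (m - 1 - j) * ((-2) ^ j * y) := by
      rw [← mul_assoc, ← pow_add]; congr 2; omega
    rw [h2, abs_mul, abs_pow] at h1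
    simpa using h1
  have hstep : ∀ j < m - 1, -1 ≤ (-2 : ℝ) ^ j * y := by
    intro j hj
    by_cases hj2 : j + 2 = m
    · have : (-2 : ℝ) ^ (m - 1) * y = -2 * ((-2) ^ j * y) := by
        rw [show m - 1 = j + 1 by omega, pow_succ']; ring
      linarith
    · have h1 := habs j hj.le
      have h2 : (4 : ℝ) ≤ 2 ^ (m - 1 - j) := by
        calc (4 : ℝ) = 2 ^ 2 := by norm_num
          _ ≤ _ := pow_le_pow_right₀ (by norm_num) (by omega)
      have h3 : |(-2 : ℝ) ^ j * y| ≤ 1 := by nlinarith [abs_nonneg ((-2 : ℝ) ^ j * y)]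
      exact (abs_le.1 h3).1
  have hit := skew_iter hb.le (m - 1) hstep
  have hper : IsPeriodicPt (skew b) m y := by
    rw [IsPeriodicPt, IsFixedPt]
    nth_rw 1 [show m = m - 1 + 1 by omega]
    rw [iterate_succ_apply', hit _ le_rfl, skew_left hb.le hy0, hy2]
  refine ⟨y, ?_, ?_⟩
  · have h1 := habs 0 (by omega)
    have h2 : (2 : ℝ) ≤ 2 ^ (m - 1 - 0) := by
      calc (2 : ℝ) = 2 ^ 1 := by norm_num
        _ ≤ _ := pow_le_pow_right₀ (by norm_num) (by omega)
    simp only [pow_zero, one_mul] at h1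
    have h3 : |y| ≤ 2 := by nlinarith [abs_nonneg y]
    have := abs_le.1 h3
    exact ⟨by linarith, this.2⟩
  · have hle := hper.minimalPeriod_le (by omega)
    have hpos := hper.minimalPeriod_pos (by omega)
    by_contra hne
    have h1 : (skew b)^[minimalPeriod (skew b) y] y = y := isPeriodicPt_minimalPeriod _ _
    rw [hit _ (by omega)] at h1
    have h2 : (-2 : ℝ) ^ minimalPeriod (skew b) y = 1 := by
      apply mul_right_cancel₀ hyne; rw [h1, one_mul]
    have h3 : (2 : ℝ) ^ minimalPeriod (skew b) y = 1 := by
      have := congrArg abs h2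
      simpa [abs_pow] using this
    have := one_lt_pow₀ (one_lt_two : (1 : ℝ) < 2) hpos.ne'
    linarith

lemma skew_odd (K : ℕ) {x : ℝ} (hx : x ∈ Icc (-4 : ℝ) 2)
    (ho : Odd (minimalPeriod (skew ((1 / 4) ^ K)) x))
    (h1 : minimalPeriod (skew ((1 / 4) ^ K)) x ≠ 1) :
    2 * K + 3 ≤ minimalPeriod (skew ((1 / 4) ^ K)) x := by
  set b : ℝ := (1 / 4) ^ K with hbdef
  have hb : 0 < b := by positivity
  have hb1 : b ≤ 1 := pow_le_one₀ (by norm_num) (by norm_num)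
  set m := minimalPeriod (skew b) x with hm
  have hper : x ∈ periodicPts (skew b) := minimalPeriod_pos_iff_mem_periodicPts.1 ho.pos
  have hI : ∀ j, (skew b)^[j] x ∈ Icc (-4 : ℝ) 2 := fun j => (skew_mapsTo hb.le hb1).iterate j hx
  have h0 : ∀ j, (skew b)^[j] x ≠ 0 := by
    intro j hj
    have := minimalPeriod_apply_iterate hper j
    rw [hj, ← hm] at this
    apply h1
    rw [← this]
    apply minimalPeriod_eq_one_iff_isFixedPt.2
    rw [IsFixedPt, skew_right hb.le (by norm_num)]; norm_num
  obtain ⟨i, hi, hi'⟩ : ∃ i, (skew b)^[i] x < 0 ∧ (skew b)^[i + 1] x < 0 := by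
    by_contra! hcon
    have halt : ∀ j, (0 < (skew b)^[j + 1] x ↔ ¬ 0 < (skew b)^[j] x) := by
      intro j
      constructor
      · intro h h'
        rw [iterate_succ_apply', skew_right hb.le (by linarith)] at h
        linarith
      · intro h
        have h2 := lt_of_le_of_ne (not_lt.1 h) (h0 j)
        exact lt_of_le_of_ne (hcon j h2) (h0 (j + 1)).symm
    have halt2 : ∀ j, (0 < (skew b)^[2 * j] x ↔ 0 < x) := by
      intro j
      induction j with
      | zero => simp
      | succ j ih =>
        rw [show 2 * (j + 1) = 2 * j + 1 + 1 by ring, halt, halt, not_not, ih]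
    obtain ⟨j, hj⟩ := ho
    have h3 := halt (2 * j)
    rw [← hj, halt2 j] at h3
    have h4 : (skew b)^[m] x = x := isPeriodicPt_minimalPeriod _ _
    rw [h4] at h3
    tauto
  set y := (skew b)^[i] x with hy
  have hyper : minimalPeriod (skew b) y = m := minimalPeriod_apply_iterate hper i
  have hyI := hI i
  rw [iterate_succ_apply', ← hy] at hi'
  rw [← hy] at hyI
  have hy1 : y < -1 := by
    by_contra h
    rw [skew_right hb.le (not_lt.1 h)] at hi'
    linarith
  have hw : -b ≤ skew b y := by
    rw [skew_left hb.le hy1.le]; nlinarith [hyI.1]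
  set w := skew b y with hwdef
  have hge : ∀ j < 2 * K + 1, -1 ≤ (-2 : ℝ) ^ j * w := by
    intro j hj
    rcases Nat.even_or_odd j with he | hoj
    · rw [he.neg_pow]
      have h2 : (2 : ℝ) ^ j ≤ 2 ^ (2 * K) := pow_le_pow_right₀ (by norm_num) (by omega)
      have h3 : (2 : ℝ) ^ (2 * K) * b = 1 := by
        rw [hbdef, pow_mul, ← mul_pow]; norm_num
      have h4 : (0 : ℝ) < 2 ^ j := by positivity
      nlinarith
    · rw [hoj.neg_pow]
      have h4 : (0 : ℝ) < 2 ^ j := by positivity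
      nlinarith
  have hit := skew_iter hb.le _ hge
  by_contra hlt
  have hodd := ho
  obtain ⟨l, hl⟩ := ho
  have hmy : (skew b)^[m] y = y := by rw [← hyper]; exact isPeriodicPt_minimalPeriod _ _
  have hmy2 : (skew b)^[2 * l] w = y := by
    rw [hl] at hmy
    exact hmy
  rw [hit _ (by omega)] at hmy2
  have := hge (2 * l) (by omega)
  linarith

/-- The map on `[0,1]` conjugate to `skew`. -/
noncomputable def skewI (b t : ℝ) : ℝ := (skew b (6 * t - 4) + 4) / 6

lemma skewI_iter (b t : ℝ) (j : ℕ) : (skewI b)^[j] t = ((skew b)^[j] (6 * t - 4) + 4) / 6 := by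
  induction j with
  | zero => simp
  | succ j ih =>
    rw [iterate_succ_apply', ih, iterate_succ_apply', skewI]
    congr 3; ring

lemma skewI_minimalPeriod (b t : ℝ) :
    minimalPeriod (skewI b) t = minimalPeriod (skew b) (6 * t - 4) := by
  apply minimalPeriod_eq_minimalPeriod_iff.2
  intro n
  rw [IsPeriodicPt, IsFixedPt, IsPeriodicPt, IsFixedPt, skewI_iter]
  constructor <;> intro h <;> linarith

lemma skewI_periods (K m : ℕ) : m ∈ periodsOn (skewI ((1 / 4) ^ K)) (Icc (0 : ℝ) 1) ↔
    0 < m ∧ (m = 1 ∨ Even m ∨ 2 * K + 3 ≤ m) := by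
  constructor
  · rintro ⟨hm, t, ht, rfl⟩
    refine ⟨hm, ?_⟩
    rw [skewI_minimalPeriod]
    have := @skew_odd K (6 * t - 4) ⟨by linarith [ht.1], by linarith [ht.2]⟩
    by_cases h1 : minimalPeriod (skew ((1 / 4) ^ K)) (6 * t - 4) = 1
    · exact Or.inl h1
    rcases Nat.even_or_odd (minimalPeriod (skew ((1 / 4) ^ K)) (6 * t - 4)) with h | h
    · exact Or.inr (Or.inl h)
    · exact Or.inr (Or.inr (this h h1))
  · rintro ⟨hm, h⟩
    refine ⟨hm, ?_⟩
    have : ∃ y ∈ Icc (-4 : ℝ) 2, minimalPeriod (skew ((1 / 4) ^ K)) y = m := by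
      by_cases h1 : m = 1
      · refine ⟨0, by norm_num, ?_⟩
        rw [h1]
        apply minimalPeriod_eq_one_iff_isFixedPt.2
        rw [IsFixedPt, skew_right (by positivity) (by norm_num)]; norm_num
      · exact skew_exists K m (by omega) (by tauto)
    obtain ⟨y, hy, hym⟩ := this
    refine ⟨(y + 4) / 6, ⟨by linarith [hy.1], by linarith [hy.2]⟩, ?_⟩
    rw [skewI_minimalPeriod, ← hym]
    congr 1; ring

lemma skewI_mapsTo (K : ℕ) :
    MapsTo (skewI ((1 / 4) ^ K)) (Icc (0 : ℝ) 1) (Icc (0 : ℝ) 1) := by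
  intro t ht
  have := @skew_mapsTo ((1 / 4) ^ K) (by positivity) (pow_le_one₀ (by norm_num) (by norm_num))
    (6 * t - 4) ⟨by linarith [ht.1], by linarith [ht.2]⟩
  unfold skewI
  exact ⟨by linarith [this.1], by linarith [this.2]⟩

lemma skewI_continuous (b : ℝ) : Continuous (skewI b) := by
  unfold skewI skew; fun_prop

lemma oddPart_odd {n : ℕ} (h : Odd n) : oddPart n = n := by
  unfold oddPart
  rw [Nat.factorization_eq_zero_of_not_dvd (by obtain ⟨k, rfl⟩ := h; omega)]
  simp

lemma fact_odd {n : ℕ} (h : Odd n) : n.factorization 2 = 0 :=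
  Nat.factorization_eq_zero_of_not_dvd (by obtain ⟨k, rfl⟩ := h; omega)

lemma fact_two_mul {n : ℕ} (h : 0 < n) : (2 * n).factorization 2 = n.factorization 2 + 1 := by
  rw [Nat.factorization_mul (by norm_num) h.ne']
  simp [Nat.prime_two.factorization, add_comm]

lemma oddPart_two_mul (n : ℕ) : oddPart (2 * n) = oddPart n := by
  rcases Nat.eq_zero_or_pos n with rfl | h
  · rfl
  unfold oddPart
  rw [fact_two_mul h, pow_succ', Nat.mul_div_mul_left _ _ (by norm_num)]

lemma zero_notMem (n : ℕ) (hn : 0 < n) : 0 ∉ sharkSegment n := by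
  simp [sharkSegment, SharkLt, oddPart]; omega

lemma segment_two_mul (n : ℕ) (hn : 0 < n) (m : ℕ) :
    m ∈ sharkSegment (2 * n) ↔ m = 1 ∨ ∃ l ∈ sharkSegment n, m = 2 * l := by
  rcases Nat.even_or_odd' m with ⟨l, rfl | rfl⟩
  · have : (2 * l = 1 ∨ ∃ l' ∈ sharkSegment n, 2 * l = 2 * l') ↔ l ∈ sharkSegment n := by
      constructor
      · rintro (h | ⟨l', h, h'⟩)
        · omega
        · rwa [show l = l' by omega]
      · intro h; exact Or.inr ⟨l, h, rfl⟩
    rw [this]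
    rcases Nat.eq_zero_or_pos l with rfl | hl
    · simpa [zero_notMem n hn] using zero_notMem (2 * n) (by omega)
    simp only [sharkSegment, SharkLt, mem_ofPred_eq, oddPart_two_mul, fact_two_mul hn,
      fact_two_mul hl]
    grind
  · have ho : Odd (2 * l + 1) := ⟨l, rfl⟩
    simp only [sharkSegment, SharkLt, mem_ofPred_eq, oddPart_two_mul, fact_two_mul hn,
      oddPart_odd ho, fact_odd ho]
    grind

lemma oddPart_ge_three {m : ℕ} (hm : 0 < m) (h : Even m) : 0 < m.factorization 2 :=
  Nat.prime_two.factorization_pos_of_dvd hm.ne' h.two_dvd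

lemma segment_odd (K m : ℕ) :
    m ∈ sharkSegment (2 * K + 3) ↔ 0 < m ∧ (m = 1 ∨ Even m ∨ 2 * K + 3 ≤ m) := by
  have ho : Odd (2 * K + 3) := ⟨K + 1, by ring⟩
  rcases Nat.eq_zero_or_pos m with rfl | hm
  · simpa using zero_notMem (2 * K + 3) (by omega)
  rcases Nat.even_or_odd m with he | hom
  · have := oddPart_ge_three hm he
    simp only [sharkSegment, SharkLt, mem_ofPred_eq, oddPart_odd ho, fact_odd ho]
    grind
  · simp only [sharkSegment, SharkLt, mem_ofPred_eq, oddPart_odd ho, fact_odd ho,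
      oddPart_odd hom, fact_odd hom]
    grind

lemma segment_one (m : ℕ) : m ∈ sharkSegment 1 ↔ m = 1 := by
  have ho : Odd 1 := odd_one
  rcases Nat.eq_zero_or_pos m with rfl | hm
  · simpa using zero_notMem 1 (by omega)
  simp only [sharkSegment, SharkLt, mem_ofPred_eq, oddPart_odd ho]
  grind

/-- **Sharkovsky's Theorem (converse half).** For every `n ∈ ℕ ∪ {2^∞}` there is a
continuous map `f : [0,1] → [0,1]` whose set of periods of cycles is exactly `S(n)`. -/
theorem sharkovsky_converse :
    (∀ n : ℕ, 0 < n → ∃ f : ℝ → ℝ, ContinuousOn f (Set.Icc (0 : ℝ) 1) ∧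
      Set.MapsTo f (Set.Icc (0 : ℝ) 1) (Set.Icc (0 : ℝ) 1) ∧
      periodsOn f (Set.Icc (0 : ℝ) 1) = sharkSegment n) ∧
    (∃ f : ℝ → ℝ, ContinuousOn f (Set.Icc (0 : ℝ) 1) ∧
      Set.MapsTo f (Set.Icc (0 : ℝ) 1) (Set.Icc (0 : ℝ) 1) ∧
      periodsOn f (Set.Icc (0 : ℝ) 1) = {m : ℕ | ∃ k : ℕ, m = 2 ^ k}) := by
  constructor
  · intro n
    induction n using Nat.strong_induction_on with
    | _ n ih =>
      intro hn
      rcases Nat.even_or_odd' n with ⟨l, rfl | rfl⟩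
      · obtain ⟨f, hc, hm, hp⟩ := ih l (by omega) (by omega)
        refine ⟨dbl f, dbl_continuousOn hc, dbl_mapsTo hm, ?_⟩
        ext m
        rw [dbl_periods hm (fun _ _ => rfl), segment_two_mul l (by omega), hp]
      · rcases l with _ | K
        · refine ⟨id, continuousOn_id, fun x hx => hx, ?_⟩
          ext m
          rw [show 2 * 0 + 1 = 1 by norm_num, segment_one]
          constructor
          · rintro ⟨_, x, _, rfl⟩
            simp
          · rintro rfl
            exact ⟨one_pos, 0, by simp, by simp⟩
        · refine ⟨skewI ((1 / 4) ^ K), (skewI_continuous _).continuousOn, skewI_mapsTo K, ?_⟩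
          ext m
          rw [skewI_periods, show 2 * (K + 1) + 1 = 2 * K + 3 by ring, segment_odd]
  · obtain ⟨f, hc, hm, he⟩ := exists_dbl_fixed
    refine ⟨f, hc.continuousOn, hm, ?_⟩
    ext m
    constructor
    · induction m using Nat.strong_induction_on with
      | _ m ih =>
        intro h
        have h0 := h.1
        rcases (dbl_periods hm he m).1 h with h1 | ⟨l, hl, rfl⟩
        · exact ⟨0, by simpa using h1⟩
        · obtain ⟨k, hk⟩ := ih l (by omega) hl
          exact ⟨k + 1, by rw [hk, pow_succ']⟩
    · rintro ⟨k, rfl⟩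
      induction k with
      | zero => exact (dbl_periods hm he _).2 (Or.inl (by simp))
      | succ k ih => exact (dbl_periods hm he _).2 (Or.inr ⟨_, ih, by rw [pow_succ']⟩)
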